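/- arXiv:2302.14787 — 3 statements merged into one kernel-verified Lean document; each statement's English description precedes it below -/
import Mathlib

section
/- Let g be a Lie algebra over ℂ containing an sl₂-triple (x, y, h), let A be a commutative associative unital ℂ-algebra generated as a ℂ-algebra by elements a₁, …, a_m, and let M be a module over the current Lie algebra g ⊗ A. Suppose w ∈ M and ψ : A → ℂ is a linear map such that (x ⊗ a) • w = 0 and (h ⊗ a) • w = ψ(a)·w for all a ∈ A, that N := ψ(1) is a nonnegative integer, and that (y ⊗ 1)^{N+1} • w = 0. Then for all s₁, …, s_m ∈ ℕ, the vector (y ⊗ a₁^{s₁}⋯a_m^{s_m}) • w lies in span_ℂ{ (y ⊗ a₁^{ℓ₁}⋯a_m^{ℓ_m}) • w : 0 ≤ ℓᵢ < N for i = 1, …, m }. In particular, the subspace span_ℂ{ (y ⊗ a) • w : a ∈ A } of M is finite dimensional. -/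
open scoped TensorProduct

/-- The current Lie algebra `g ⊗ A` (realized as `A ⊗[ℂ] g`, with bracket
`⁅a ⊗ x, b ⊗ y⁆ = ab ⊗ ⁅x, y⁆`) is a Lie algebra over `ℂ`. -/
noncomputable instance currentLieAlgebra {A g : Type*} [CommRing A] [Algebra ℂ A]
    [LieRing g] [LieAlgebra ℂ g] : LieAlgebra ℂ (A ⊗[ℂ] g) where
  lie_smul c x y := by
    rw [← algebraMap_smul A c y, lie_smul, algebraMap_smul]

namespace CurrentAux

variable {A M : Type*} [CommRing A] [Algebra ℂ A] [AddCommGroup M] [Module ℂ M]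

/-- The product `y_{b^{e₁}} ⋯ y_{b^{e_r}} w`. -/
def F (Y : A →ₗ[ℂ] Module.End ℂ M) (b : A) (w : M) : List ℕ → M
  | [] => w
  | e :: l => Y (b ^ e) (F Y b w l)

/-- Pairs (leading coefficient, vector). -/
def P (Y : A →ₗ[ℂ] Module.End ℂ M) (b : A) (w : M) (r d : ℕ) : Submodule ℂ (ℂ × M) :=
  Submodule.span ℂ {q | ∃ l : List ℕ, l.length = r ∧
    ((l.sum = d ∧ q = (1, F Y b w l)) ∨ (l.sum < d ∧ q = (0, F Y b w l)))}

variable {X Y H : A →ₗ[ℂ] Module.End ℂ M} {b : A} {w : M}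

lemma P_top {l : List ℕ} {r d : ℕ} (h1 : l.length = r) (h2 : l.sum = d) :
    ((1 : ℂ), F Y b w l) ∈ P Y b w r d :=
  Submodule.subset_span ⟨l, h1, Or.inl ⟨h2, rfl⟩⟩

lemma P_low {l : List ℕ} {r d : ℕ} (h1 : l.length = r) (h2 : l.sum < d) :
    ((0 : ℂ), F Y b w l) ∈ P Y b w r d :=
  Submodule.subset_span ⟨l, h1, Or.inr ⟨h2, rfl⟩⟩

lemma P_map (T : Module.End ℂ M) (k : ℂ) {r d r' d' : ℕ}
    (hT : ∀ l : List ℕ, l.length = r → l.sum = d → (k, T (F Y b w l)) ∈ P Y b w r' d')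
    (hL : ∀ l : List ℕ, l.length = r → l.sum < d → ((0 : ℂ), T (F Y b w l)) ∈ P Y b w r' d')
    {c : ℂ} {v : M} (h : (c, v) ∈ P Y b w r d) : (k * c, T v) ∈ P Y b w r' d' := by
  have : P Y b w r d ≤ (P Y b w r' d').comap ((k • LinearMap.id).prodMap T) := by
    refine Submodule.span_le.2 ?_
    rintro q ⟨l, h1, ⟨h2, rfl⟩ | ⟨h2, rfl⟩⟩
    · simpa using hT l h1 h2
    · simpa using hL l h1 h2
  simpa using this h

lemma P_mono {r d d' : ℕ} (hd : d < d') {c : ℂ} {v : M} (h : (c, v) ∈ P Y b w r d) :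
    ((0 : ℂ), v) ∈ P Y b w r d' := by
  have := P_map (r' := r) (d' := d') LinearMap.id 0 (fun l h1 h2 => P_low h1 (by omega))
    (fun l h1 h2 => P_low h1 (by omega)) h
  simpa using this

lemma P_Y (e : ℕ) {r d : ℕ} {c : ℂ} {v : M} (h : (c, v) ∈ P Y b w r d) :
    (c, Y (b ^ e) v) ∈ P Y b w (r + 1) (e + d) := by
  have := P_map (r' := r + 1) (d' := e + d) (Y (b ^ e)) 1
    (fun l h1 h2 => P_top (l := e :: l) (by simp [h1]) (by simp [h2]))
    (fun l h1 h2 => P_low (l := e :: l) (by simp [h1]) (by simp [h2])) h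
  simpa using this

lemma P_H (ψ : A →ₗ[ℂ] ℂ) (hw : ∀ a, H a w = ψ a • w)
    (hHY : ∀ a c v, H a (Y c v) = Y c (H a v) - (2 : ℂ) • Y (a * c) v) (k : ℕ) (hk : 0 < k)
    (l : List ℕ) : ((-2 * l.length : ℂ), H (b ^ k) (F Y b w l)) ∈ P Y b w l.length (k + l.sum) := by
  induction l with
  | nil =>
    have := (P Y b w 0 k).smul_mem (ψ (b ^ k)) (P_low (l := []) rfl (by simpa using hk))
    simpa [F, hw] using this
  | cons e l ih =>
    have h1 := P_Y e ih
    have h2 : ((1 : ℂ), F Y b w ((k + e) :: l)) ∈ P Y b w (l.length + 1) (e + (k + l.sum)) :=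
      P_top (by simp) (by simp; omega)
    have h3 := Submodule.sub_mem _ h1 (Submodule.smul_mem _ (2 : ℂ) h2)
    have e1 : k + (e :: l).sum = e + (k + l.sum) := by simp; omega
    rw [e1, List.length_cons]
    convert h3 using 1
    refine Prod.ext ?_ ?_
    · simp only [Prod.fst_sub, Prod.smul_fst, smul_eq_mul]
      push_cast
      ring
    · simp [F, hHY, pow_add]

lemma P_X (ψ : A →ₗ[ℂ] ℂ) (hw : ∀ a, H a w = ψ a • w) (hXw : ∀ a, X a w = 0)
    (hHY : ∀ a c v, H a (Y c v) = Y c (H a v) - (2 : ℂ) • Y (a * c) v)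
    (hXY : ∀ a c v, X a (Y c v) = Y c (X a v) + H (a * c) v)
    (l : List ℕ) (r : ℕ) (hr : l.length = r + 1) :
    ((-(r * (r + 1)) : ℂ), X b (F Y b w l)) ∈ P Y b w r (l.sum + 1) := by
  induction l generalizing r with
  | nil => simp at hr
  | cons e l ih =>
    have hl : l.length = r := by simpa using hr
    have h2 := P_H (Y := Y) (b := b) ψ hw hHY (e + 1) (by omega) l
    rw [hl] at h2
    have e1 : (e :: l).sum + 1 = e + 1 + l.sum := by simp; omega
    have e2 : X b (F Y b w (e :: l)) =
        Y (b ^ e) (X b (F Y b w l)) + H (b ^ (e + 1)) (F Y b w l) := by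
      simp [F, hXY, pow_succ']
    rw [e1, e2]
    cases r with
    | zero =>
      have : l = [] := by simpa using hl
      subst this
      simpa [F, hXw] using h2
    | succ r =>
      have h1 := P_Y e (ih r hl)
      rw [show e + (l.sum + 1) = e + 1 + l.sum by omega] at h1
      convert Submodule.add_mem _ h1 h2 using 1
      simp
      ring

lemma P_iter (ψ : A →ₗ[ℂ] ℂ) (hw : ∀ a, H a w = ψ a • w) (hXw : ∀ a, X a w = 0)
    (hHY : ∀ a c v, H a (Y c v) = Y c (H a v) - (2 : ℂ) • Y (a * c) v)
    (hXY : ∀ a c v, X a (Y c v) = Y c (X a v) + H (a * c) v)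
    (r : ℕ) : ∀ (d : ℕ) (c : ℂ), c ≠ 0 → (c, (0 : M)) ∈ P Y b w (r + 1) d →
      ∃ c' : ℂ, c' ≠ 0 ∧ (c', (0 : M)) ∈ P Y b w 1 (d + r) := by
  induction r with
  | zero => intro d c hc h; exact ⟨c, hc, h⟩
  | succ r ih =>
    intro d c hc h
    have := P_map (r' := r + 1) (d' := d + 1) (X b) (-((r + 1 : ℕ) * ((r + 1 : ℕ) + 1)) : ℂ)
      (fun l h1 h2 => by
        have := P_X (b := b) ψ hw hXw hHY hXY l (r + 1) h1
        rwa [h2] at this)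
      (fun l h1 h2 => P_mono (by omega) (P_X (b := b) ψ hw hXw hHY hXY l (r + 1) h1)) h
    rw [map_zero] at this
    obtain ⟨c', h1, h2⟩ := ih (d + 1) _ (mul_ne_zero (neg_ne_zero.2 (mul_ne_zero
      (Nat.cast_ne_zero.2 (by omega)) (by exact_mod_cast (by omega : r + 1 + 1 ≠ 0)))) hc) this
    exact ⟨c', h1, by rwa [show d + (r + 1) = d + 1 + r by omega]⟩

open Polynomial in
lemma P_one (N : ℕ) {q : ℂ × M} (h : q ∈ P Y b w 1 N) :
    ∃ p : ℂ[X], p.natDegree ≤ N ∧ p.coeff N = q.1 ∧ Y (aeval b p) w = q.2 := by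
  have key : ∀ l : List ℕ, l.length = 1 → ∃ e, l = [e] := fun l hl => List.length_eq_one_iff.1 hl
  induction h using Submodule.span_induction with
  | mem q hq =>
    obtain ⟨l, h1, h2⟩ := hq
    obtain ⟨e, rfl⟩ := key l h1
    refine ⟨X ^ e, ?_, ?_, ?_⟩ <;> rcases h2 with ⟨h2, rfl⟩ | ⟨h2, rfl⟩ <;>
      simp only [List.sum_cons, List.sum_nil, add_zero] at h2 <;>
      simp [F, coeff_X_pow] <;> omega
  | zero => exact ⟨0, by simp⟩
  | add q q' _ _ h1 h2 =>
    obtain ⟨p, a1, a2, a3⟩ := h1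
    obtain ⟨p', b1, b2, b3⟩ := h2
    exact ⟨p + p', natDegree_add_le_of_degree_le a1 b1, by simp [a2, b2], by simp [a3, b3]⟩
  | smul c q _ h1 =>
    obtain ⟨p, a1, a2, a3⟩ := h1
    exact ⟨c • p, (natDegree_smul_le _ _).trans a1, by simp [a2], by simp [a3]⟩

open Polynomial in
lemma exists_monic (ψ : A →ₗ[ℂ] ℂ) (hw : ∀ a, H a w = ψ a • w) (hXw : ∀ a, X a w = 0)
    (hHY : ∀ a c v, H a (Y c v) = Y c (H a v) - (2 : ℂ) • Y (a * c) v)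
    (hXY : ∀ a c v, X a (Y c v) = Y c (X a v) + H (a * c) v)
    (N : ℕ) (hy : (fun v => Y 1 v)^[N + 1] w = 0) (b : A) :
    ∃ p : ℂ[X], p.Monic ∧ p.natDegree = N ∧ Y (aeval b p) w = 0 := by
  have hF : ∀ n, F Y b w (List.replicate n 0) = (fun v => Y 1 v)^[n] w := by
    intro n
    induction n with
    | zero => rfl
    | succ n ih => rw [Function.iterate_succ_apply', ← ih]; simp [List.replicate_succ, F]
  have h0 : ((1 : ℂ), F Y b w (List.replicate (N + 1) 0)) ∈ P Y b w (N + 1) 0 :=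
    P_top (by simp) (by simp)
  rw [hF, hy] at h0
  obtain ⟨c, hc, h1⟩ := P_iter ψ hw hXw hHY hXY N 0 1 one_ne_zero h0
  rw [zero_add] at h1
  obtain ⟨p, p1, p2, p3⟩ := P_one N h1
  simp only at p2 p3
  have hd : p.natDegree = N := le_antisymm p1 (le_natDegree_of_ne_zero (by rwa [p2]))
  have hlc : p.leadingCoeff = c := by rw [leadingCoeff, hd, p2]
  refine ⟨C c⁻¹ * p, ?_, ?_, ?_⟩
  · rw [Monic, leadingCoeff_mul, leadingCoeff_C, hlc, inv_mul_cancel₀ hc]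
  · rw [natDegree_C_mul (inv_ne_zero hc), hd]
  · rw [← smul_eq_C_mul]; simp [p3]

/-- The annihilator ideal. -/
def K (ψ : A →ₗ[ℂ] ℂ) (hw : ∀ a, H a w = ψ a • w)
    (hHY : ∀ a c v, H a (Y c v) = Y c (H a v) - (2 : ℂ) • Y (a * c) v) : Ideal A where
  carrier := {c | Y c w = 0}
  add_mem' := by intro a c h1 h2; simp_all
  zero_mem' := by simp
  smul_mem' := by
    intro a c h
    simp only [Set.mem_ofPred_eq, smul_eq_mul] at h ⊢
    have := hHY a c w
    rw [h, hw, map_smul, h] at this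
    simpa using this

open Polynomial in
lemma main (ψ : A →ₗ[ℂ] ℂ) (hw : ∀ a, H a w = ψ a • w) (hXw : ∀ a, X a w = 0)
    (hHY : ∀ a c v, H a (Y c v) = Y c (H a v) - (2 : ℂ) • Y (a * c) v)
    (hXY : ∀ a c v, X a (Y c v) = Y c (X a v) + H (a * c) v)
    (N : ℕ) (hy : (fun v => Y 1 v)^[N + 1] w = 0) (m : ℕ) (a : Fin m → A) (s : Fin m → ℕ) :
    Y (∏ i, a i ^ s i) w ∈ Submodule.span ℂ
          {v : M | ∃ ℓ : Fin m → ℕ, (∀ i, ℓ i < N) ∧ v = Y (∏ i, a i ^ ℓ i) w} := by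
  choose p hp hd hk using fun i => exists_monic ψ hw hXw hHY hXY N hy (a i)
  let I := K ψ hw hHY
  let f : Fin m → ℕ → ℂ := fun i j => (Polynomial.X ^ s i %ₘ p i).coeff j
  have h1 : ∀ i, Ideal.Quotient.mk I (a i ^ s i) =
      Ideal.Quotient.mk I (∑ j ∈ Finset.range N, f i j • a i ^ j) := by
    intro i
    have e1 : aeval (a i) (Polynomial.X ^ s i %ₘ p i) = ∑ j ∈ Finset.range N, f i j • a i ^ j := by
      by_cases hN : N = 0
      · have : p i = 1 := (hp i).natDegree_eq_zero.1 (by rw [hd, hN])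
        simp [this, hN]
      · apply aeval_eq_sum_range'
        have := natDegree_modByMonic_lt (Polynomial.X ^ s i) (hp i) (by
          intro h; apply hN; rw [← hd i, h]; simp)
        rwa [hd] at this
    rw [← e1, Ideal.Quotient.eq]
    have e2 := congrArg (aeval (a i)) (modByMonic_add_div (Polynomial.X ^ s i) (p i))
    have e3 : a i ^ s i - aeval (a i) (Polynomial.X ^ s i %ₘ p i) =
        aeval (a i) (Polynomial.X ^ s i /ₘ p i) * aeval (a i) (p i) := by
      simp only [map_add, map_mul, map_pow, aeval_X] at e2
      rw [← e2]; ring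
    rw [e3]
    exact I.mul_mem_left _ (hk i)
  have h2 : Ideal.Quotient.mk I (∏ i, a i ^ s i) =
      Ideal.Quotient.mk I (∏ i, ∑ j ∈ Finset.range N, f i j • a i ^ j) := by
    rw [map_prod, map_prod]; exact Finset.prod_congr rfl fun i _ => h1 i
  have h3 : Y (∏ i, a i ^ s i - ∏ i, ∑ j ∈ Finset.range N, f i j • a i ^ j) w = 0 :=
    Ideal.Quotient.eq.1 h2
  rw [map_sub, LinearMap.sub_apply, sub_eq_zero] at h3
  rw [h3, Finset.prod_univ_sum, map_sum, LinearMap.sum_apply]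
  refine Submodule.sum_mem _ fun l hl => ?_
  have e : ∏ i, f i (l i) • a i ^ l i = (∏ i, f i (l i)) • ∏ i, a i ^ l i := by
    simp only [Algebra.smul_def, Finset.prod_mul_distrib, map_prod]
  rw [e, map_smul, LinearMap.smul_apply]
  refine Submodule.smul_mem _ _ (Submodule.subset_span ⟨l, fun i => ?_, rfl⟩)
  simpa using Fintype.mem_piFinset.1 hl i

lemma fin (Y : A →ₗ[ℂ] Module.End ℂ M) (w : M) (N m : ℕ) (a : Fin m → A)
    (hgen : Algebra.adjoin ℂ (Set.range a) = ⊤)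
    (h : ∀ s : Fin m → ℕ, Y (∏ i, a i ^ s i) w ∈ Submodule.span ℂ
          {v : M | ∃ ℓ : Fin m → ℕ, (∀ i, ℓ i < N) ∧ v = Y (∏ i, a i ^ ℓ i) w}) :
    FiniteDimensional ℂ ↥(Submodule.span ℂ {v : M | ∃ b : A, v = Y b w}) := by
  have hfin : {v : M | ∃ ℓ : Fin m → ℕ, (∀ i, ℓ i < N) ∧ v = Y (∏ i, a i ^ ℓ i) w}.Finite := by
    refine (Set.finite_range
      (fun ℓ : Fin m → Fin N => Y (∏ i, a i ^ (ℓ i : ℕ)) w)).subset ?_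
    rintro v ⟨ℓ, h1, rfl⟩
    exact ⟨fun i => ⟨ℓ i, h1 i⟩, rfl⟩
  have := FiniteDimensional.span_of_finite ℂ hfin
  refine Submodule.finiteDimensional_of_le (Submodule.span_le.2 ?_) (S₂ := Submodule.span ℂ
    {v : M | ∃ ℓ : Fin m → ℕ, (∀ i, ℓ i < N) ∧ v = Y (∏ i, a i ^ ℓ i) w})
  rintro v ⟨b, rfl⟩
  have hb : b ∈ Algebra.adjoin ℂ (Set.range a) := by rw [hgen]; trivial
  rw [Algebra.adjoin_range_eq_range_aeval] at hb
  obtain ⟨q, rfl⟩ := hb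
  simp only [AlgHom.toRingHom_eq_coe, RingHom.coe_coe, SetLike.mem_coe]
  rw [MvPolynomial.aeval_def, MvPolynomial.eval₂_eq', map_sum, LinearMap.sum_apply]
  refine Submodule.sum_mem _ fun d _ => ?_
  rw [← Algebra.smul_def, map_smul, LinearMap.smul_apply]
  exact Submodule.smul_mem _ _ (h d)

end CurrentAux

/-- Let `(x, y, h)` be an sl₂-triple in `g`, `A` a commutative associative
unital ℂ-algebra generated by `a₁, …, a_m`, and `M` a module over the current algebra
`g ⊗ A`.  If `(x ⊗ a) • w = 0` and `(h ⊗ a) • w = ψ(a)·w` for all `a ∈ A`, `ψ(1) = N ∈ ℕ`,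
and `(y ⊗ 1)^{N+1} • w = 0`, then `(y ⊗ a₁^{s₁}⋯a_m^{s_m}) • w` lies in
`span_ℂ{(y ⊗ a₁^{ℓ₁}⋯a_m^{ℓ_m}) • w : 0 ≤ ℓᵢ < N}`; in particular
`span_ℂ{(y ⊗ a) • w : a ∈ A}` is finite dimensional. -/
theorem current_algebra_lowering_span
    {g A M : Type*} [LieRing g] [LieAlgebra ℂ g] [CommRing A] [Algebra ℂ A]
    [AddCommGroup M] [Module ℂ M] [LieRingModule (A ⊗[ℂ] g) M]
    [LieModule ℂ (A ⊗[ℂ] g) M]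
    (x y h : g)
    (hx2 : ⁅h, x⁆ = (2 : ℂ) • x) (hy2 : ⁅h, y⁆ = (-2 : ℂ) • y) (hxy : ⁅x, y⁆ = h)
    (m : ℕ) (a : Fin m → A) (hgen : Algebra.adjoin ℂ (Set.range a) = ⊤)
    (w : M) (ψ : A →ₗ[ℂ] ℂ)
    (hxw : ∀ b : A, ⁅b ⊗ₜ[ℂ] x, w⁆ = 0)
    (hhw : ∀ b : A, ⁅b ⊗ₜ[ℂ] h, w⁆ = ψ b • w)
    (N : ℕ) (hN : ψ 1 = (N : ℂ))
    (hyw : (fun v => ⁅(1 : A) ⊗ₜ[ℂ] y, v⁆)^[N + 1] w = 0) :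
    (∀ s : Fin m → ℕ,
        ⁅(∏ i, a i ^ s i) ⊗ₜ[ℂ] y, w⁆ ∈ Submodule.span ℂ
          {v : M | ∃ ℓ : Fin m → ℕ, (∀ i, ℓ i < N) ∧
            v = ⁅(∏ i, a i ^ ℓ i) ⊗ₜ[ℂ] y, w⁆})
      ∧ FiniteDimensional ℂ
          ↥(Submodule.span ℂ {v : M | ∃ b : A, v = ⁅b ⊗ₜ[ℂ] y, w⁆}) := by
  let Z (z : g) : A →ₗ[ℂ] Module.End ℂ M :=
    LinearMap.mk₂ ℂ (fun b v => ⁅b ⊗ₜ[ℂ] z, v⁆)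
      (fun b c v => by rw [TensorProduct.add_tmul, add_lie])
      (fun t b v => by rw [← TensorProduct.smul_tmul', smul_lie])
      (fun b v v' => by rw [lie_add])
      (fun t b v => by rw [lie_smul])
  have hZ : ∀ z b v, Z z b v = ⁅b ⊗ₜ[ℂ] z, v⁆ := fun z b v => rfl
  have hbr : ∀ z z' b c v, Z z b (Z z' c v) = Z z' c (Z z b v) + Z ⁅z, z'⁆ (b * c) v := by
    intro z z' b c v
    simp only [hZ]
    rw [leibniz_lie, LieAlgebra.ExtendScalars.bracket_tmul, add_comm]
  have hw : ∀ b, Z h b w = ψ b • w := hhw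
  have hHY : ∀ b c v, Z h b (Z y c v) = Z y c (Z h b v) - (2 : ℂ) • Z y (b * c) v := by
    intro b c v
    rw [hbr, hy2]
    simp only [hZ]
    rw [TensorProduct.tmul_smul, smul_lie, neg_smul, sub_eq_add_neg]
  have hXY : ∀ b c v, Z x b (Z y c v) = Z y c (Z x b v) + Z h (b * c) v := by
    intro b c v
    rw [hbr, hxy]
  have hmain := CurrentAux.main ψ hw hxw hHY hXY N hyw m a
  exact ⟨hmain, CurrentAux.fin (Z y) w N m a hgen hmain⟩
end

section
/- Let V be a finite-dimensional vector space over ℂ and Q a quadratic form on V. Then any two simple modules over the Clifford algebra Cliff(V, Q) are finite dimensional and have the same dimension over ℂ. -/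
/-- An irreducible Clifford representation, given by the action of the generating vectors. -/
structure IsIrrRep {V : Type*} [AddCommGroup V] [Module ℂ V] (Q : QuadraticForm ℂ V)
    {M : Type*} [AddCommGroup M] [Module ℂ M] (ρ : V →ₗ[ℂ] M →ₗ[ℂ] M) : Prop where
  sq : ∀ v m, ρ v (ρ v m) = Q v • m
  nontriv : ∃ m : M, m ≠ 0
  irr : ∀ W : Submodule ℂ M, (∀ v, ∀ m ∈ W, ρ v m ∈ W) → W = ⊥ ∨ W = ⊤

section
variable {V : Type*} [AddCommGroup V] [Module ℂ V] {Q : QuadraticForm ℂ V}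
    {M : Type*} [AddCommGroup M] [Module ℂ M] {ρ : V →ₗ[ℂ] M →ₗ[ℂ] M}

theorem IsIrrRep.anti (h : IsIrrRep Q ρ) (v w : V) (m : M) :
    ρ v (ρ w m) + ρ w (ρ v m) = QuadraticMap.polar Q v w • m := by
  have h1 := h.sq (v + w) m
  simp only [map_add, LinearMap.add_apply, h.sq] at h1
  rw [QuadraticMap.polar, sub_smul, sub_smul, ← h1]
  abel

/-- The kernel of an isotropic vector is nonzero. -/
theorem IsIrrRep.ker_ne_bot (h : IsIrrRep Q ρ) {e : V} (he : Q e = 0) :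
    ∃ m : M, m ≠ 0 ∧ ρ e m = 0 := by
  obtain ⟨m, hm⟩ := h.nontriv
  by_cases h0 : ρ e m = 0
  · exact ⟨m, hm, h0⟩
  · exact ⟨ρ e m, h0, by rw [h.sq, he, zero_smul]⟩

/-- Isotropic radical vectors act by zero. -/
theorem IsIrrRep.rad (h : IsIrrRep Q ρ) {e : V} (he : Q e = 0)
    (hp : ∀ v, QuadraticMap.polar Q e v = 0) : ρ e = 0 := by
  rcases h.irr (LinearMap.ker (ρ e)) (by
    intro v m hm
    rw [LinearMap.mem_ker] at hm ⊢
    have := h.anti e v m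
    rwa [hm, map_zero, add_zero, hp, zero_smul] at this) with hk | hk
  · obtain ⟨m, hm, hm0⟩ := h.ker_ne_bot he
    have : m ∈ LinearMap.ker (ρ e) := hm0
    rw [hk] at this
    exact absurd this hm
  · exact LinearMap.ker_eq_top.mp hk

theorem IsIrrRep.dim_one_of_scalar (h : IsIrrRep Q ρ)
    (hs : ∀ v, ∃ c : ℂ, ∀ m, ρ v m = c • m) :
    FiniteDimensional ℂ M ∧ Module.finrank ℂ M = 1 := by
  obtain ⟨m, hm⟩ := h.nontriv
  have hf : Module.finrank ℂ M = 1 := by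
    refine finrank_eq_one m hm fun w => ?_
    rcases h.irr (ℂ ∙ m) (by
      intro v x hx
      obtain ⟨c, hc⟩ := hs v
      rw [hc]
      exact Submodule.smul_mem _ _ hx) with hk | hk
    · exact absurd (Submodule.span_singleton_eq_bot.mp hk) hm
    · have : w ∈ (ℂ ∙ m) := by rw [hk]; trivial
      exact Submodule.mem_span_singleton.mp this
  exact ⟨Module.finite_of_finrank_eq_succ hf, hf⟩

theorem IsIrrRep.dim_one (h : IsIrrRep Q ρ)
    (H : ∀ e, Q e = 0 → ∀ v, QuadraticMap.polar Q e v = 0) :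
    FiniteDimensional ℂ M ∧ Module.finrank ℂ M = 1 := by
  apply h.dim_one_of_scalar
  by_cases hw : ∀ w, Q w = 0
  · intro v
    exact ⟨0, fun m => by rw [h.rad (hw v) (H v (hw v))]; simp⟩
  push Not at hw
  obtain ⟨w, hw⟩ := hw
  have hv : ∀ v, ∃ t : ℂ, ρ v = t • ρ w := by
    intro v
    obtain ⟨t, ht⟩ : ∃ t : ℂ, Q w * (t * t) + QuadraticMap.polar Q v w * t + Q v = 0 :=
      exists_quadratic_eq_zero hw
        (by obtain ⟨s, hs⟩ := IsAlgClosed.exists_pow_nat_eq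
              (discrim (Q w) (QuadraticMap.polar Q v w) (Q v)) (n := 2) (by norm_num)
            exact ⟨s, by rw [← hs, pow_two]⟩)
    have h0 : Q (v + t • w) = 0 := by
      rw [QuadraticMap.map_add Q, QuadraticMap.map_smul, QuadraticMap.polar_smul_right,
        smul_eq_mul, smul_eq_mul, ← ht]
      ring
    have := h.rad h0 (H _ h0)
    refine ⟨-t, ?_⟩
    rw [map_add, map_smul] at this
    rw [neg_smul]
    exact eq_neg_of_add_eq_zero_left this
  obtain ⟨s, hs⟩ := IsAlgClosed.exists_pow_nat_eq (Q w) (n := 2) (by norm_num)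
  have hws : ∃ c : ℂ, ∀ m, ρ w m = c • m := by
    rcases h.irr (LinearMap.ker (ρ w - s • LinearMap.id)) (by
      intro v m hm
      obtain ⟨t, ht⟩ := hv v
      have hm' : ρ w m = s • m := by simpa [sub_eq_zero] using hm
      simp [ht, hm']) with hk | hk
    · refine ⟨-s, fun m => ?_⟩
      have : ρ w m + s • m ∈ LinearMap.ker (ρ w - s • LinearMap.id) := by
        simp only [LinearMap.mem_ker, LinearMap.sub_apply, LinearMap.smul_apply,
          LinearMap.id_apply, map_add, map_smul, h.sq, ← hs]
        module
      rw [hk, Submodule.mem_bot] at this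
      rw [neg_smul]
      exact eq_neg_of_add_eq_zero_left this
    · refine ⟨s, fun m => ?_⟩
      have : m ∈ LinearMap.ker (ρ w - s • LinearMap.id) := by rw [hk]; trivial
      simpa [sub_eq_zero] using this
  obtain ⟨c, hc⟩ := hws
  intro v
  obtain ⟨t, ht⟩ := hv v
  exact ⟨t * c, fun m => by rw [ht, LinearMap.smul_apply, hc, smul_smul]⟩

/-- The orthogonal complement of two vectors. -/
def perpPair (Q : QuadraticForm ℂ V) (e f : V) : Submodule ℂ V where
  carrier := {v | QuadraticMap.polar Q e v = 0 ∧ QuadraticMap.polar Q f v = 0}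
  add_mem' := by
    rintro a b ⟨h1, h2⟩ ⟨h3, h4⟩
    exact ⟨by rw [QuadraticMap.polar_add_right, h1, h3, add_zero],
      by rw [QuadraticMap.polar_add_right, h2, h4, add_zero]⟩
  zero_mem' := ⟨QuadraticMap.polar_zero_right _ _, QuadraticMap.polar_zero_right _ _⟩
  smul_mem' := by
    rintro c a ⟨h1, h2⟩
    exact ⟨by rw [QuadraticMap.polar_smul_right, h1, smul_zero],
      by rw [QuadraticMap.polar_smul_right, h2, smul_zero]⟩

theorem IsIrrRep.swap (h : IsIrrRep Q ρ) {v w : V} (hp : QuadraticMap.polar Q v w = 0) (m : M) :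
    ρ v (ρ w m) = - ρ w (ρ v m) := by
  have := h.anti v w m
  rw [hp, zero_smul] at this
  exact eq_neg_of_add_eq_zero_left this

/-- The action of the orthogonal complement on the kernel of `e`. -/
def kerRep (h : IsIrrRep Q ρ) (e f : V) :
    perpPair Q e f →ₗ[ℂ] LinearMap.ker (ρ e) →ₗ[ℂ] LinearMap.ker (ρ e) where
  toFun v := (ρ v.1).restrict (by
    intro m hm
    rw [LinearMap.mem_ker] at hm ⊢
    rw [h.swap v.2.1, hm, map_zero, neg_zero])
  map_add' a b := by ext m; simp
  map_smul' c a := by ext m; simp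

theorem kerRep_coe (h : IsIrrRep Q ρ) (e f : V) (v : perpPair Q e f) (m : LinearMap.ker (ρ e)) :
    (kerRep h e f v m : M) = ρ v.1 m.1 := rfl

theorem IsIrrRep.ef (h : IsIrrRep Q ρ) {e f : V} (hef : QuadraticMap.polar Q e f = 1) (m : M) :
    ρ e (ρ f m) = m - ρ f (ρ e m) := by
  have := h.anti e f m
  rw [hef, one_smul] at this
  exact eq_sub_of_add_eq this

theorem IsIrrRep.kerRep_irr (h : IsIrrRep Q ρ) {e f : V} (he : Q e = 0) (hf : Q f = 0)
    (hef : QuadraticMap.polar Q e f = 1) :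
    IsIrrRep (Q.comp (perpPair Q e f).subtype) (kerRep h e f) where
  sq v m := by
    apply Subtype.ext
    rw [kerRep_coe, kerRep_coe, h.sq]
    rfl
  nontriv := by
    obtain ⟨m, hm, hm0⟩ := h.ker_ne_bot he
    exact ⟨⟨m, hm0⟩, fun h0 => hm (congrArg Subtype.val h0)⟩
  irr W hW := by
    have hee : ∀ m, ρ e (ρ e m) = 0 := fun m => by rw [h.sq, he, zero_smul]
    have hff : ∀ m, ρ f (ρ f m) = 0 := fun m => by rw [h.sq, hf, zero_smul]
    set W1 : Submodule ℂ M := W.map (LinearMap.ker (ρ e)).subtype with hW1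
    have hinv : ∀ v ∈ perpPair Q e f, ∀ m ∈ W1, ρ v m ∈ W1 := by
      rintro v hv _ ⟨m, hm, rfl⟩
      exact ⟨kerRep h e f ⟨v, hv⟩ m, hW _ _ hm, rfl⟩
    have hk : ∀ m ∈ W1, ρ e m = 0 := by
      rintro _ ⟨m, hm, rfl⟩
      exact m.2
    let W2 : Submodule ℂ M := W1.comap (ρ e) ⊓ W1.comap (ρ e ∘ₗ ρ f)
    have hmem : ∀ m, m ∈ W2 ↔ ρ e m ∈ W1 ∧ ρ e (ρ f m) ∈ W1 := fun m => Iff.rfl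
    have hfe : QuadraticMap.polar Q f e = 1 := by rw [QuadraticMap.polar_comm, hef]
    have hpe : QuadraticMap.polar Q e e = 0 := by rw [QuadraticMap.polar_self, he, smul_zero]
    have hpf : QuadraticMap.polar Q f f = 0 := by rw [QuadraticMap.polar_self, hf, smul_zero]
    rcases h.irr W2 (by
      intro v m hm
      obtain ⟨ha, hb⟩ := (hmem m).mp hm
      have hE : ρ e m ∈ W2 := by
        rw [hmem, hee, h.ef hef, hee, map_zero, sub_zero]
        exact ⟨W1.zero_mem, ha⟩
      have hF : ρ f m ∈ W2 := by
        rw [hmem, hff, map_zero]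
        exact ⟨hb, W1.zero_mem⟩
      set v' := v - QuadraticMap.polar Q f v • e - QuadraticMap.polar Q e v • f with hv'
      have hvp : v' ∈ perpPair Q e f := by
        constructor
        · simp [hv', QuadraticMap.polar_sub_right, QuadraticMap.polar_smul_right, hpe, hef]
        · simp [hv', QuadraticMap.polar_sub_right, QuadraticMap.polar_smul_right, hpf, hfe]
      have hV : ρ v' m ∈ W2 := by
        rw [hmem, h.swap hvp.2, map_neg, h.swap hvp.1, h.swap hvp.1, neg_neg]
        exact ⟨W1.neg_mem (hinv _ hvp _ ha), hinv _ hvp _ hb⟩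
      have hdec : v = v' + QuadraticMap.polar Q f v • e + QuadraticMap.polar Q e v • f := by
        rw [hv']; abel
      rw [hdec]
      simp only [map_add, map_smul, LinearMap.add_apply, LinearMap.smul_apply]
      exact W2.add_mem (W2.add_mem hV (W2.smul_mem _ hE)) (W2.smul_mem _ hF)) with hk2 | hk2
    · left
      rw [eq_bot_iff]
      intro x hx
      have hx1 : (x : M) ∈ W1 := ⟨x, hx, rfl⟩
      have hx2 : (x : M) ∈ W2 := by
        rw [hmem, h.ef hef, hk _ hx1, map_zero, sub_zero]
        exact ⟨W1.zero_mem, hx1⟩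
      rw [hk2] at hx2
      exact Subtype.ext hx2
    · right
      rw [eq_top_iff]
      intro x _
      have hx2 : (x : M) ∈ W2 := by rw [hk2]; trivial
      have hx1 := ((hmem _).mp hx2).2
      have hx0 : ρ e x.1 = 0 := x.2
      rw [h.ef hef, hx0, map_zero, sub_zero] at hx1
      obtain ⟨y, hy, hyx⟩ := hx1
      rwa [← Subtype.ext hyx]

/-- `M` is two copies of the kernel of `e`. -/
def IsIrrRep.kerEquiv (h : IsIrrRep Q ρ) {e f : V} (he : Q e = 0) (hf : Q f = 0)
    (hef : QuadraticMap.polar Q e f = 1) :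
    (LinearMap.ker (ρ e) × LinearMap.ker (ρ e)) ≃ₗ[ℂ] M where
  toFun p := p.1.1 + ρ f p.2.1
  map_add' a b := by simp; abel
  map_smul' c a := by simp
  invFun m := (⟨ρ e (ρ f m), by rw [LinearMap.mem_ker, h.sq, he, zero_smul]⟩,
    ⟨ρ e m, by rw [LinearMap.mem_ker, h.sq, he, zero_smul]⟩)
  left_inv p := by
    obtain ⟨⟨a, ha⟩, ⟨b, hb⟩⟩ := p
    rw [LinearMap.mem_ker] at ha hb
    ext
    · simp [h.sq, hf, h.ef hef, ha]
    · simp [h.ef hef, ha, hb]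
  right_inv m := by
    simp [h.ef hef]

end

theorem irr_same_dim (n : ℕ) : ∀ {V : Type*} [AddCommGroup V] [Module ℂ V]
    [FiniteDimensional ℂ V] (Q : QuadraticForm ℂ V) (_ : Module.finrank ℂ V = n)
    {M N : Type*} [AddCommGroup M] [AddCommGroup N] [Module ℂ M] [Module ℂ N]
    (ρ : V →ₗ[ℂ] M →ₗ[ℂ] M) (σ : V →ₗ[ℂ] N →ₗ[ℂ] N) (_ : IsIrrRep Q ρ) (_ : IsIrrRep Q σ),
    FiniteDimensional ℂ M ∧ FiniteDimensional ℂ N ∧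
      Module.finrank ℂ M = Module.finrank ℂ N := by
  induction n using Nat.strong_induction_on with
  | _ n ih =>
  intro V _ _ _ Q hn M N _ _ _ _ ρ σ hρ hσ
  by_cases H : ∀ e, Q e = 0 → ∀ v, QuadraticMap.polar Q e v = 0
  · obtain ⟨h1, h2⟩ := hρ.dim_one H
    obtain ⟨h3, h4⟩ := hσ.dim_one H
    exact ⟨h1, h3, h2.trans h4.symm⟩
  push Not at H
  obtain ⟨e, he, v, hb⟩ := H
  obtain ⟨f, hf, hef⟩ : ∃ f, Q f = 0 ∧ QuadraticMap.polar Q e f = 1 := by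
    have hpe : QuadraticMap.polar Q e e = 0 := by rw [QuadraticMap.polar_self, he, smul_zero]
    set b := QuadraticMap.polar Q e v with hbdef
    refine ⟨b⁻¹ • (v + (-(Q v / b)) • e), ?_, ?_⟩
    · rw [QuadraticMap.map_smul, QuadraticMap.map_add Q, QuadraticMap.map_smul,
        QuadraticMap.polar_smul_right, QuadraticMap.polar_comm Q v e, he, ← hbdef]
      simp only [smul_eq_mul]
      field_simp
      ring
    · rw [QuadraticMap.polar_smul_right, QuadraticMap.polar_add_right,
        QuadraticMap.polar_smul_right, hpe, ← hbdef]
      simp [hb]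
  have hlt : Module.finrank ℂ (perpPair Q e f) < n := by
    rw [← hn]
    apply Submodule.finrank_lt
    intro ht
    have : e ∈ perpPair Q e f := by rw [ht]; trivial
    have h2 := this.2
    rw [QuadraticMap.polar_comm, hef] at h2
    exact one_ne_zero h2
  obtain ⟨h1, h2, h3⟩ := ih _ hlt _ rfl _ _ (hρ.kerRep_irr he hf hef) (hσ.kerRep_irr he hf hef)
  refine ⟨Module.Finite.equiv (hρ.kerEquiv he hf hef),
    Module.Finite.equiv (hσ.kerEquiv he hf hef), ?_⟩
  rw [← (hρ.kerEquiv he hf hef).finrank_eq, ← (hσ.kerEquiv he hf hef).finrank_eq,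
    Module.finrank_prod, Module.finrank_prod, h3]

/-- The representation attached to a Clifford module. -/
def cliffRep {V : Type*} [AddCommGroup V] [Module ℂ V] (Q : QuadraticForm ℂ V)
    (M : Type*) [AddCommGroup M] [Module ℂ M] [Module (CliffordAlgebra Q) M]
    [IsScalarTower ℂ (CliffordAlgebra Q) M] : V →ₗ[ℂ] M →ₗ[ℂ] M :=
  (Algebra.lsmul ℂ ℂ M : CliffordAlgebra Q →ₐ[ℂ] Module.End ℂ M).toLinearMap ∘ₗ
    CliffordAlgebra.ι Q

theorem cliffRep_irr {V : Type*} [AddCommGroup V] [Module ℂ V] (Q : QuadraticForm ℂ V)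
    (M : Type*) [AddCommGroup M] [Module ℂ M] [Module (CliffordAlgebra Q) M]
    [IsScalarTower ℂ (CliffordAlgebra Q) M] [IsSimpleModule (CliffordAlgebra Q) M] :
    IsIrrRep Q (cliffRep Q M) where
  sq v m := by
    change CliffordAlgebra.ι Q v • CliffordAlgebra.ι Q v • m = _
    rw [smul_smul, CliffordAlgebra.ι_sq_scalar, algebraMap_smul]
  nontriv := by
    have := IsSimpleModule.nontrivial (CliffordAlgebra Q) M
    exact exists_ne 0
  irr W hW := by
    have key : ∀ (a : CliffordAlgebra Q), ∀ m ∈ W, a • m ∈ W := by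
      intro a
      induction a using CliffordAlgebra.induction with
      | algebraMap r => intro m hm; rw [algebraMap_smul]; exact W.smul_mem _ hm
      | ι v => intro m hm; exact hW v m hm
      | mul a b ha hb => intro m hm; rw [mul_smul]; exact ha _ (hb _ hm)
      | add a b ha hb => intro m hm; rw [add_smul]; exact W.add_mem (ha _ hm) (hb _ hm)
    let W' : Submodule (CliffordAlgebra Q) M :=
      { W.toAddSubmonoid with smul_mem' := fun a m hm => key a m hm }
    have hm : ∀ m, m ∈ W' ↔ m ∈ W := fun m => Iff.rfl
    rcases eq_bot_or_eq_top W' with h | h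
    · left; ext m; rw [← hm, h]; simp
    · right; ext m; rw [← hm, h]; simp

/-- Over a finite-dimensional complex vector space `V` with quadratic form
`Q`, any two simple modules over the Clifford algebra `Cliff(V, Q)` are finite dimensional
over ℂ and have the same ℂ-dimension. -/
theorem simple_clifford_modules_same_dimension
    {V : Type*} [AddCommGroup V] [Module ℂ V] [FiniteDimensional ℂ V]
    (Q : QuadraticForm ℂ V)
    (M N : Type*) [AddCommGroup M] [AddCommGroup N]
    [Module ℂ M] [Module (CliffordAlgebra Q) M] [IsScalarTower ℂ (CliffordAlgebra Q) M]
    [Module ℂ N] [Module (CliffordAlgebra Q) N] [IsScalarTower ℂ (CliffordAlgebra Q) N]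
    [IsSimpleModule (CliffordAlgebra Q) M] [IsSimpleModule (CliffordAlgebra Q) N] :
    FiniteDimensional ℂ M ∧ FiniteDimensional ℂ N ∧
      Module.finrank ℂ M = Module.finrank ℂ N := by
  exact irr_same_dim _ Q rfl _ _ (cliffRep_irr Q M) (cliffRep_irr Q N)
end

section
/- Let g be a Lie algebra over ℂ, let u, h ∈ g and c ∈ ℂ with c ≠ 0 satisfy ⁅h, u⁆ = c·u, let A be a commutative associative unital ℂ-algebra, let M be a module over the current Lie algebra g ⊗ A, and let V ⊆ M be a ℂ-subspace such that (h ⊗ b) • V ⊆ V for all b ∈ A. Then the set I = { a ∈ A : (u ⊗ a) • v = 0 for all v ∈ V } is an ideal of A. -/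
open scoped TensorProduct

/-- Let `u, h ∈ g` with `⁅h, u⁆ = c·u`, `c ≠ 0`, let `M` be a module over
the current Lie algebra `g ⊗ A`, and let `V ⊆ M` be a ℂ-subspace with
`(h ⊗ b) • V ⊆ V` for all `b ∈ A`.  Then
`{a ∈ A : (u ⊗ a) • v = 0 for all v ∈ V}` is an ideal of `A`. -/
theorem annihilator_set_is_ideal
    {g A M : Type*} [LieRing g] [LieAlgebra ℂ g] [CommRing A] [Algebra ℂ A]
    [AddCommGroup M] [Module ℂ M] [LieRingModule (A ⊗[ℂ] g) M]
    [LieModule ℂ (A ⊗[ℂ] g) M]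
    (u h : g) (c : ℂ) (hc : c ≠ 0) (hhu : ⁅h, u⁆ = c • u)
    (V : Submodule ℂ M) (hV : ∀ b : A, ∀ v ∈ V, ⁅b ⊗ₜ[ℂ] h, v⁆ ∈ V) :
    ∃ I : Ideal A, ∀ a : A, a ∈ I ↔ ∀ v ∈ V, ⁅a ⊗ₜ[ℂ] u, v⁆ = 0 := by
  refine ⟨{
      carrier := {a | ∀ v ∈ V, ⁅a ⊗ₜ[ℂ] u, v⁆ = 0}
      add_mem' := ?_
      zero_mem' := ?_
      smul_mem' := ?_ }, fun a => Iff.rfl⟩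
  · intro a b ha hb v hv
    rw [TensorProduct.add_tmul, add_lie, ha v hv, hb v hv, add_zero]
  · intro v _
    rw [TensorProduct.zero_tmul, zero_lie]
  · intro b a ha v hv
    have key : ⁅⁅b ⊗ₜ[ℂ] h, a ⊗ₜ[ℂ] u⁆, v⁆ = 0 := by
      rw [lie_lie, ha v hv, ha _ (hV b v hv), lie_zero, sub_zero]
    rw [LieAlgebra.ExtendScalars.bracket_tmul, hhu, TensorProduct.tmul_smul, smul_lie] at key
    exact (smul_eq_zero.mp key).resolve_left hc
end
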